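/- arXiv:2007.08075 — 2 statements merged into one kernel-verified Lean document; each statement's English description precedes it below -/
import Mathlib

section
/- There is an absolute constant C > 0 such that for every ε ∈ (0,1) and every finite set V with n = |V| ≥ 2 the following holds: there exist a finite auxiliary node set A with |A| ≤ C·ε^{−1/2}·(1 + log₂(1 + log₂(1/ε))) and a weight function ŵ : (V ∪ A) × (V ∪ A) → ℝ≥0 with at most C·n·ε^{−1/2}·(1 + log₂(1 + log₂(1/ε))) nonzero values, such that for every S ⊆ V, |S|·(n − |S|) ≤ min_{T ⊆ A} dircut_ŵ(S ∪ T) ≤ (1+ε)·|S|·(n − |S|). (This gives an augmented cut sparsifier for the complete graph on n nodes, whose cut function is S ↦ |S|·(n−|S|).) -/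
/-- Directed cut value of a weighted directed graph on a finite node set. -/
noncomputable def dirCut {N : Type*} [Fintype N] [DecidableEq N]
    (W : N → N → ℝ) (U : Finset N) : ℝ :=
  ∑ u ∈ U, ∑ v ∈ Uᶜ, W u v

lemma exists_seg (b : ℕ → ℝ) (s : ℝ) (h0 : b 0 ≤ s) (k : ℕ) (hk : s ≤ b (k + 1)) :
    ∃ i ≤ k, b i ≤ s ∧ s ≤ b (i + 1) := by
  induction k with
  | zero => exact ⟨0, le_rfl, h0, hk⟩
  | succ k ih =>
    rcases le_total s (b (k + 1)) with h | h
    · obtain ⟨i, hi, h1⟩ := ih h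
      exact ⟨i, by omega, h1⟩
    · exact ⟨k + 1, le_rfl, h, hk⟩

/-- The hat-function sum is `n` times the chord interpolant of `s (n - s)`. -/
lemma hat_sum (b : ℕ → ℝ) (n s : ℝ) (i : ℕ) (m : ℕ) (hn : 0 ≤ n) (him : i ≤ m)
    (h1 : ∀ j < i, b (j + 1) ≤ s) (h2 : ∀ j, i ≤ j → j < m → s ≤ b (j + 1)) :
    ∑ j ∈ Finset.range m, (b (j + 2) - b j) * min (s * (n - b (j + 1))) (b (j + 1) * (n - s))
      = (n - s) * (b i * b (i + 1) - b 0 * b 1)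
        + s * ((n - b i) * (n - b (i + 1)) - (n - b m) * (n - b (m + 1))) := by
  have key : ∀ m, i ≤ m → (∀ j, i ≤ j → j < m → s ≤ b (j + 1)) →
    ∑ j ∈ Finset.range m, (b (j + 2) - b j) * min (s * (n - b (j + 1))) (b (j + 1) * (n - s))
      = (n - s) * (b i * b (i + 1) - b 0 * b 1)
        + s * ((n - b i) * (n - b (i + 1)) - (n - b m) * (n - b (m + 1))) := by
    intro m him
    induction m, him using Nat.le_induction with
    | base =>
      intro _
      have key2 : ∀ i, (∀ j < i, b (j + 1) ≤ s) →
        ∑ j ∈ Finset.range i, (b (j + 2) - b j) *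
          min (s * (n - b (j + 1))) (b (j + 1) * (n - s))
        = (n - s) * (b i * b (i + 1) - b 0 * b 1) := by
        intro i
        induction i with
        | zero => intro _; simp
        | succ i ih =>
          intro h
          rw [Finset.sum_range_succ, ih (fun j hj => h j (by omega)), min_eq_right]
          · ring
          · nlinarith [h i (by omega)]
      rw [key2 i h1]; ring
    | succ m hm ih =>
      intro h
      rw [Finset.sum_range_succ, ih (fun j hj hj' => h j hj (by omega)), min_eq_left]
      · ring
      · nlinarith [h m hm (by omega)]
  exact key m him h2

/-- Interpolation error between consecutive Chebyshev-type points. -/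
lemma seg_err (x y n s : ℝ) :
    (s - n * Real.sin x ^ 2) * (n * Real.sin y ^ 2 - s) ≤
      Real.sin (y - x) ^ 2 * (s * (n - s)) := by
  have e : Real.sin (y - x) ^ 2 * (s * (n - s)) -
      (s - n * Real.sin x ^ 2) * (n * Real.sin y ^ 2 - s)
      = (Real.cos (y - x) * s - n * (Real.sin x * Real.sin y)) ^ 2 := by
    rw [Real.sin_sub, Real.cos_sub]
    have hx := Real.cos_sq' x
    have hy := Real.cos_sq' y
    have hx2 : Real.cos x ^ 2 = 1 - Real.sin x ^ 2 := hx
    generalize Real.cos x = cx at *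
    generalize Real.cos y = cy at *
    generalize Real.sin x = sx at *
    generalize Real.sin y = sy at *
    have hxx : sx ^ 2 = 1 - cx ^ 2 := by linarith
    have hyy : sy ^ 2 = 1 - cy ^ 2 := by linarith
    grind
  nlinarith [sq_nonneg (Real.cos (y - x) * s - n * (Real.sin x * Real.sin y))]

/-- Bipartite gadget weights. -/
noncomputable def gadW {V : Type} {m : ℕ} (p q : Fin m → ℝ) : V ⊕ Fin m → V ⊕ Fin m → ℝ
  | Sum.inl _, Sum.inr j => p j
  | Sum.inr j, Sum.inl _ => q j
  | _, _ => 0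

lemma dirCut_gadW {V : Type} [Fintype V] [DecidableEq V] {m : ℕ} (p q : Fin m → ℝ)
    (S : Finset V) (T : Finset (Fin m)) :
    dirCut (gadW p q) (S.image Sum.inl ∪ T.image Sum.inr) =
      ∑ j, if j ∈ T then q j * ((Fintype.card V : ℝ) - S.card) else p j * S.card := by
  have e : (S.image Sum.inl ∪ T.image Sum.inr : Finset (V ⊕ Fin m)) = S.disjSum T := by
    ext x; simp [Finset.mem_disjSum]
  have e2 : (S.disjSum T)ᶜ = Sᶜ.disjSum Tᶜ := by
    ext x; rcases x with x | x <;> simp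
  have hc : ((Sᶜ).card : ℝ) = (Fintype.card V : ℝ) - S.card := by
    rw [Finset.card_compl, Nat.cast_sub (Finset.card_le_univ S)]
  unfold dirCut
  rw [e, e2]
  simp only [Finset.sum_disjSum, gadW, Finset.sum_const_zero, zero_add, add_zero,
    Finset.sum_const, nsmul_eq_mul]
  rw [hc, ← Finset.sum_add_sum_compl T]
  rw [add_comm]
  congr 1
  · refine Finset.sum_congr rfl fun j hj => ?_
    rw [if_pos hj]; ring
  · rw [Finset.mul_sum]
    refine Finset.sum_congr rfl fun j hj => ?_
    rw [if_neg (Finset.mem_compl.1 hj)]; ring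

lemma iInf_gadW {V : Type} [Fintype V] [DecidableEq V] {m : ℕ} (p q : Fin m → ℝ)
    (S : Finset V) :
    (⨅ T : Finset (Fin m), dirCut (gadW p q) (S.image Sum.inl ∪ T.image Sum.inr)) =
      ∑ j, min (p j * S.card) (q j * ((Fintype.card V : ℝ) - S.card)) := by
  simp only [dirCut_gadW]
  apply le_antisymm
  · refine (ciInf_le (Set.finite_range _).bddBelow
      (Finset.univ.filter fun j => q j * ((Fintype.card V : ℝ) - S.card) ≤ p j * S.card)).trans ?_
    refine Finset.sum_le_sum fun j _ => ?_
    simp only [Finset.mem_filter, Finset.mem_univ, true_and]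
    split_ifs with h
    · rw [min_eq_right h]
    · rw [min_eq_left (not_le.1 h).le]
  · refine le_ciInf fun T => Finset.sum_le_sum fun j _ => ?_
    split_ifs
    · exact min_le_right _ _
    · exact min_le_left _ _

lemma ncard_gadW {V : Type} [Fintype V] [DecidableEq V] {m : ℕ} (p q : Fin m → ℝ) :
    {x : (V ⊕ Fin m) × (V ⊕ Fin m) | gadW p q x.1 x.2 ≠ 0}.ncard ≤
      2 * (Fintype.card V * m) := by
  classical
  let F : Finset ((V ⊕ Fin m) × (V ⊕ Fin m)) :=
    (Finset.univ : Finset (V × Fin m)).image (fun z => (Sum.inl z.1, Sum.inr z.2)) ∪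
    (Finset.univ : Finset (V × Fin m)).image (fun z => (Sum.inr z.2, Sum.inl z.1))
  have hsub : {x : (V ⊕ Fin m) × (V ⊕ Fin m) | gadW p q x.1 x.2 ≠ 0} ⊆ (F : Set _) := by
    rintro ⟨x | x, y | y⟩ h <;> simp [gadW, F] at h ⊢
  have h1 := Set.ncard_le_ncard hsub F.finite_toSet
  rw [Set.ncard_coe_finset] at h1
  refine h1.trans ((Finset.card_union_le _ _).trans ?_)
  have h2 := Finset.card_image_le (s := (Finset.univ : Finset (V × Fin m)))
    (f := fun z => ((Sum.inl z.1, Sum.inr z.2) : (V ⊕ Fin m) × (V ⊕ Fin m)))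
  have h3 := Finset.card_image_le (s := (Finset.univ : Finset (V × Fin m)))
    (f := fun z => ((Sum.inr z.2, Sum.inl z.1) : (V ⊕ Fin m) × (V ⊕ Fin m)))
  simp only [Finset.card_univ, Fintype.card_prod, Fintype.card_fin] at h2 h3
  omega

/-- The analytic core: existence of breakpoints. -/
lemma core (ε : ℝ) (h0 : 0 < ε) (h1 : ε < 1) (n : ℝ) (hn : 0 < n) (m : ℕ)
    (hm : 4 / Real.sqrt ε < (m : ℝ) + 1) :
    ∃ b : ℕ → ℝ, (∀ j < m, b j ≤ b (j + 2)) ∧ (∀ j, 0 ≤ b j ∧ b j ≤ n) ∧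
      ∀ s, 0 ≤ s → s ≤ n →
      (1 - ε / 2) * (s * (n - s)) * n ≤ ∑ j ∈ Finset.range m,
        (b (j + 2) - b j) * min (s * (n - b (j + 1))) (b (j + 1) * (n - s)) ∧
      ∑ j ∈ Finset.range m,
        (b (j + 2) - b j) * min (s * (n - b (j + 1))) (b (j + 1) * (n - s)) ≤ s * (n - s) * n := by
  have hM : (0 : ℝ) < (m : ℝ) + 1 := by positivity
  let φ : ℕ → ℝ := fun j => (j : ℝ) * (Real.pi / 2 / ((m : ℝ) + 1))
  have hφ0 : ∀ j, 0 ≤ φ j := fun j => by positivity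
  have hφ1 : ∀ j, j ≤ m + 1 → φ j ≤ Real.pi / 2 := by
    intro j hj
    have hj' : (j : ℝ) ≤ (m : ℝ) + 1 := by exact_mod_cast hj
    have : φ j ≤ ((m : ℝ) + 1) * (Real.pi / 2 / ((m : ℝ) + 1)) := by
      apply mul_le_mul_of_nonneg_right hj'; positivity
    rwa [mul_div_cancel₀ _ hM.ne'] at this
  have hφm : φ (m + 1) = Real.pi / 2 := by
    simp only [φ]; push_cast; exact mul_div_cancel₀ _ hM.ne'
  let b : ℕ → ℝ := fun j => n * Real.sin (φ j) ^ 2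
  have hmono : ∀ i j, i ≤ j → j ≤ m + 1 → b i ≤ b j := by
    intro i j hij hj
    have hle : φ i ≤ φ j := by
      apply mul_le_mul_of_nonneg_right (by exact_mod_cast hij); positivity
    have hs : Real.sin (φ i) ≤ Real.sin (φ j) :=
      Real.sin_le_sin_of_le_of_le_pi_div_two (by linarith [hφ0 i, Real.pi_pos]) (hφ1 j hj) hle
    have hs0 : 0 ≤ Real.sin (φ i) :=
      Real.sin_nonneg_of_nonneg_of_le_pi (hφ0 i)
        (by linarith [hφ1 i (by omega), Real.pi_pos])
    apply mul_le_mul_of_nonneg_left _ hn.le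
    exact pow_le_pow_left₀ hs0 hs 2
  have hb0 : b 0 = 0 := by simp [b, φ]
  have hbm : b (m + 1) = n := by simp [b, hφm]
  refine ⟨b, fun j hj => hmono _ _ (by omega) (by omega), fun j => ⟨by positivity, ?_⟩, ?_⟩
  · have := Real.sin_sq_le_one (φ j)
    simp only [b]; nlinarith
  intro s hs0 hsn
  obtain ⟨i, him, hi1, hi2⟩ := exists_seg b s (by rw [hb0]; exact hs0) m (by rw [hbm]; exact hsn)
  rw [hat_sum b n s i m hn.le him (fun j hj => (hmono _ _ (by omega) (by omega)).trans hi1)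
    (fun j hj hj' => hi2.trans (hmono _ _ (by omega) (by omega))), hb0, hbm]
  have herr : (s - b i) * (b (i + 1) - s) ≤
      Real.sin (φ (i + 1) - φ i) ^ 2 * (s * (n - s)) := seg_err _ _ _ _
  have hd : φ (i + 1) - φ i = Real.pi / 2 / ((m : ℝ) + 1) := by
    simp only [φ]; push_cast; ring
  have hsq : Real.sin (φ (i + 1) - φ i) ^ 2 ≤ ε / 2 := by
    rw [hd]
    set t := Real.pi / 2 / ((m : ℝ) + 1) with ht
    have ht0 : 0 ≤ t := by positivity
    have h3 : Real.sin t ^ 2 ≤ t ^ 2 := by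
      rw [sq_le_sq]
      have := Real.abs_sin_le_abs (x := t)
      exact this
    have hr : 0 < Real.sqrt ε := Real.sqrt_pos.2 h0
    have h4 : t ≤ Real.sqrt ε / 2 := by
      rw [ht, div_le_iff₀ hM]
      rw [div_lt_iff₀ hr] at hm
      nlinarith [Real.pi_le_four]
    have h5 : Real.sqrt ε ^ 2 = ε := Real.sq_sqrt h0.le
    nlinarith
  have hss : 0 ≤ s * (n - s) := mul_nonneg hs0 (by linarith)
  have herr2 : (s - b i) * (b (i + 1) - s) ≤ ε / 2 * (s * (n - s)) :=
    herr.trans (mul_le_mul_of_nonneg_right hsq hss)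
  have hpos : 0 ≤ (s - b i) * (b (i + 1) - s) :=
    mul_nonneg (by linarith) (by linarith)
  constructor
  · nlinarith [mul_le_mul_of_nonneg_left herr2 hn.le]
  · nlinarith [mul_nonneg hn.le hpos]

/-- **Augmented cut sparsifiers for the complete graph.**
There is an absolute constant `C > 0` such that for every `ε ∈ (0,1)` and every finite set
`V` with `n = |V| ≥ 2`, there are an auxiliary set `A = Fin m` with
`m ≤ C·ε^{-1/2}·(1 + log₂(1 + log₂(1/ε)))` and a nonnegative weight function on
`(V ⊕ A) × (V ⊕ A)` with at most `C·n·ε^{-1/2}·(1 + log₂(1 + log₂(1/ε)))` nonzero values,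
whose augmented cut `(1+ε)`-approximates `S ↦ |S|·(n - |S|)`. -/
theorem augmented_sparsifier_complete_graph :
    ∃ C : ℝ, 0 < C ∧
      ∀ ε : ℝ, 0 < ε → ε < 1 →
      ∀ (V : Type) [Fintype V] [DecidableEq V], 2 ≤ Fintype.card V →
      ∃ (m : ℕ) (W : (V ⊕ Fin m) → (V ⊕ Fin m) → ℝ),
        (∀ u v, 0 ≤ W u v) ∧
        (m : ℝ) ≤ C * (1 / Real.sqrt ε) *
            (1 + Real.logb 2 (1 + Real.logb 2 (1 / ε))) ∧
        (({p : (V ⊕ Fin m) × (V ⊕ Fin m) | W p.1 p.2 ≠ 0}.ncard : ℝ)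
          ≤ C * (Fintype.card V : ℝ) * (1 / Real.sqrt ε) *
              (1 + Real.logb 2 (1 + Real.logb 2 (1 / ε)))) ∧
        ∀ S : Finset V,
          (S.card : ℝ) * ((Fintype.card V : ℝ) - (S.card : ℝ))
            ≤ (⨅ T : Finset (Fin m), dirCut W (S.image Sum.inl ∪ T.image Sum.inr)) ∧
          (⨅ T : Finset (Fin m), dirCut W (S.image Sum.inl ∪ T.image Sum.inr))
            ≤ (1 + ε) * ((S.card : ℝ) * ((Fintype.card V : ℝ) - (S.card : ℝ))) := by
  refine ⟨8, by norm_num, ?_⟩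
  intro ε h0 h1 V _ _ hV
  set n : ℝ := (Fintype.card V : ℝ) with hn
  have hn0 : 0 < n := by rw [hn]; exact_mod_cast (by omega : 0 < Fintype.card V)
  set L : ℝ := 1 + Real.logb 2 (1 + Real.logb 2 (1 / ε)) with hL
  have hL1 : 1 ≤ L := by
    have h2 : 0 ≤ Real.logb 2 (1 / ε) := Real.logb_nonneg (by norm_num)
      (by rw [le_div_iff₀ h0]; linarith)
    have h3 : 0 ≤ Real.logb 2 (1 + Real.logb 2 (1 / ε)) :=
      Real.logb_nonneg (by norm_num) (by linarith)
    linarith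
  have hr : 0 < 1 / Real.sqrt ε := by have := Real.sqrt_pos.2 h0; positivity
  set m : ℕ := ⌊4 / Real.sqrt ε⌋₊ with hm
  have hm1 : (m : ℝ) ≤ 4 * (1 / Real.sqrt ε) := by
    have := Nat.floor_le (a := 4 / Real.sqrt ε) (by positivity)
    rw [mul_one_div]; exact this
  have hmL : (m : ℝ) ≤ 4 * (1 / Real.sqrt ε) * L :=
    hm1.trans (le_mul_of_one_le_right (by positivity) hL1)
  obtain ⟨b, hb1, hb2, hb3⟩ := core ε h0 h1 n hn0 m (Nat.lt_floor_add_one _)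
  have hc : ∀ j : Fin m, 0 ≤ (1 + ε) / n * (b (j + 2) - b j) := fun j =>
    mul_nonneg (by positivity) (by linarith [hb1 j j.2])
  refine ⟨m, gadW (fun j => (1 + ε) / n * (b (j + 2) - b j) * (n - b (j + 1)))
    (fun j => (1 + ε) / n * (b (j + 2) - b j) * b (j + 1)), ?_, ?_, ?_, ?_⟩
  · rintro (u | u) (v | v)
    · exact le_rfl
    · exact mul_nonneg (hc v) (by linarith [(hb2 (v + 1)).2])
    · exact mul_nonneg (hc u) (hb2 (u + 1)).1
    · exact le_rfl
  · nlinarith [mul_nonneg hr.le (by linarith : (0 : ℝ) ≤ L)]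
  · refine (Nat.cast_le.2 (ncard_gadW _ _)).trans ?_
    push_cast
    rw [← hn]
    nlinarith [mul_le_mul_of_nonneg_left hmL hn0.le]
  · intro S
    rw [iInf_gadW, ← hn]
    have hs0 : (0 : ℝ) ≤ S.card := by positivity
    have hsn : (S.card : ℝ) ≤ n := by rw [hn]; exact_mod_cast Finset.card_le_univ S
    obtain ⟨g1, g2⟩ := hb3 S.card hs0 hsn
    set s : ℝ := (S.card : ℝ) with hs
    have e : ∑ j : Fin m, min ((1 + ε) / n * (b (j + 2) - b j) * (n - b (j + 1)) * s)
        ((1 + ε) / n * (b (j + 2) - b j) * b (j + 1) * (n - s)) =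
        (1 + ε) / n * ∑ j ∈ Finset.range m,
        (b (j + 2) - b j) * min (s * (n - b (j + 1))) (b (j + 1) * (n - s)) := by
      rw [← Fin.sum_univ_eq_sum_range (fun j =>
        (b (j + 2) - b j) * min (s * (n - b (j + 1))) (b (j + 1) * (n - s))), Finset.mul_sum]
      refine Finset.sum_congr rfl fun j _ => ?_
      rw [← mul_assoc, mul_min_of_nonneg _ _ (hc j)]
      congr 1 <;> ring
    rw [e]
    have hk : 0 ≤ (1 + ε) / n := by positivity
    have hss : 0 ≤ s * (n - s) := mul_nonneg hs0 (by linarith)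
    constructor
    · refine le_trans ?_ (mul_le_mul_of_nonneg_left g1 hk)
      have e2 : (1 + ε) / n * ((1 - ε / 2) * (s * (n - s)) * n) =
        ((1 + ε) * (1 - ε / 2)) * (s * (n - s)) := by field_simp
      rw [e2]
      exact le_mul_of_one_le_left hss (by nlinarith)
    · refine (mul_le_mul_of_nonneg_left g2 hk).trans (le_of_eq ?_)
      field_simp
end

section
/- For every ε ≥ 0, every r-SCB integer function w, and every natural number J, the following are equivalent: (i) there exists an r-CCB function ŵ of order at most J with w(i) ≤ ŵ(i) ≤ (1+ε)·w(i) for all i ∈ {0,…,r}; (ii) there exists a finite set L of at most J affine functions, each with strictly positive slope and nonnegative intercept, such that the function f(x) = min(w(r), min_{g∈L} g(x)) (interpreted as the constant w(r) when L is empty) satisfies w(i) ≤ f(i) ≤ (1+ε)·w(i) for all i ∈ {0,…,r}. (This shows that the optimal sparse gadget approximation problem is equivalent to the optimal piecewise linear covering problem.) -/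
/-- An `r`-SCB integer function. -/
def IsSCB (r : ℕ) (w : ℕ → ℝ) : Prop :=
  w 0 = 0 ∧ (∀ i, i < r → w i ≤ w (i + 1)) ∧
    ∀ j, 1 ≤ j → j + 1 ≤ r → w (j - 1) + w (j + 1) ≤ 2 * w j

/-- An `r`-CCB function of order `J` (possibly `J = 0`, the zero function). -/
def IsCCB (r J : ℕ) (what : ℕ → ℝ) : Prop :=
  ∃ a b : Fin J → ℝ,
    (∀ j, 0 < a j) ∧ (∀ j, 0 < b j) ∧ StrictMono b ∧ (∀ j, b j ≤ (r : ℝ)) ∧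
    ∀ i : ℕ, i ≤ r → what i = ∑ j, a j * min (i : ℝ) (b j)

lemma envelope_exists (C : ℝ) (L : Finset (ℝ × ℝ)) : (∀ g ∈ L, 0 < g.1) →
    ∃ (c : ℝ) (B : Finset ℝ) (a : ℝ → ℝ), B.card ≤ L.card ∧ (∀ b ∈ B, 0 < b ∧ 0 ≤ a b) ∧
      (∀ s : ℝ, 0 ≤ s → (∀ g ∈ L, g.1 ≤ s) → ∑ b ∈ B, a b ≤ s) ∧
      ∀ x : ℝ, 0 ≤ x → ∀ y : ℝ, y ≤ c + ∑ b ∈ B, a b * min x b ↔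
        y ≤ C ∧ ∀ g ∈ L, y ≤ g.1 * x + g.2 := by
  classical
  induction L using Finset.induction_on_max_value (fun g : ℝ × ℝ => g.1) with
  | empty =>
    intro _
    exact ⟨C, ∅, fun _ => 0, by simp, by simp, by simp, by simp⟩
  | insert g L hgL hmax ih =>
    intro hpos
    obtain ⟨c, B, a, hcard, hB, hsum, hG⟩ := ih (fun g' h' => hpos g' (Finset.mem_insert_of_mem h'))
    have hs : 0 < g.1 := hpos g (Finset.mem_insert_self _ _)
    have hS : ∑ b ∈ B, a b ≤ g.1 := hsum g.1 hs.le hmax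
    have hins : ∀ x y : ℝ, (y ≤ C ∧ ∀ g' ∈ insert g L, y ≤ g'.1 * x + g'.2) ↔
        ((y ≤ C ∧ ∀ g' ∈ L, y ≤ g'.1 * x + g'.2) ∧ y ≤ g.1 * x + g.2) := by
      intro x y
      simp only [Finset.forall_mem_insert]
      tauto
    have hgrow : ∀ x z : ℝ, x ≤ z →
        ∑ b ∈ B, a b * min z b - ∑ b ∈ B, a b * min x b ≤ g.1 * (z - x) := by
      intro x z hxz
      rw [← Finset.sum_sub_distrib]
      calc _ ≤ ∑ b ∈ B, a b * (z - x) := by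
            apply Finset.sum_le_sum
            intro b hb
            rw [← mul_sub]
            apply mul_le_mul_of_nonneg_left _ (hB b hb).2
            rcases min_cases z b with h | h <;> rcases min_cases x b with h' | h' <;> linarith
        _ = (∑ b ∈ B, a b) * (z - x) := by rw [Finset.sum_mul]
        _ ≤ _ := mul_le_mul_of_nonneg_right hS (by linarith)
    have h0 : ∑ b ∈ B, a b * min 0 b = 0 := by
      apply Finset.sum_eq_zero
      intro b hb
      rw [min_eq_left (hB b hb).1.le, mul_zero]
    by_cases hc : c ≤ g.2
    · refine ⟨c, B, a, hcard.trans (Finset.card_le_card (Finset.subset_insert _ _)), hB, ?_, ?_⟩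
      · intro s h0 h
        exact hsum s h0 (fun g' h' => h g' (Finset.mem_insert_of_mem h'))
      · intro x hx y
        rw [hins, ← hG x hx y]
        have := hgrow 0 x hx
        constructor
        · intro h
          exact ⟨h, by linarith⟩
        · exact fun h => h.1
    · push Not at hc
      obtain ⟨t, ht0, ht⟩ : ∃ t : ℝ, 0 < t ∧ g.1 * t + g.2 = c + ∑ b ∈ B, a b * min t b := by
        let h : ℝ → ℝ := fun x => g.1 * x + g.2 - (c + ∑ b ∈ B, a b * min x b)
        have hcont : Continuous h := by fun_prop
        let M : ℝ := ∑ b ∈ B, a b * b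
        have hM0 : 0 ≤ M := Finset.sum_nonneg (fun b hb => mul_nonneg (hB b hb).2 (hB b hb).1.le)
        let T : ℝ := (c + M - g.2) / g.1
        have hT : 0 ≤ T := div_nonneg (by linarith) hs.le
        have hgT : g.1 * T = c + M - g.2 := by
          simp only [T]
          field_simp
        have hTM : ∑ b ∈ B, a b * min T b ≤ M :=
          Finset.sum_le_sum (fun b hb => mul_le_mul_of_nonneg_left (min_le_right _ _) (hB b hb).2)
        have hh0 : h 0 < 0 := by
          simp only [h, h0]
          linarith
        have hhT : 0 ≤ h T := by
          simp only [h]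
          linarith
        obtain ⟨t, ht, hht⟩ := intermediate_value_Icc hT hcont.continuousOn ⟨hh0.le, hhT⟩
        refine ⟨t, lt_of_le_of_ne ht.1 ?_, ?_⟩
        · rintro rfl
          linarith
        · simp only [h] at hht
          linarith
      have htn : t ∉ B.filter (fun b => t < b) := by simp
      set B₁ := B.filter (fun b => t < b) with hB₁
      set S := ∑ b ∈ B₁, a b with hSdef
      have hS₁ : S ≤ ∑ b ∈ B, a b :=
        Finset.sum_le_sum_of_subset_of_nonneg (Finset.filter_subset _ _) (fun b hb _ => (hB b hb).2)
      have hne : ∀ b ∈ B₁, b ≠ t := fun b hb h => htn (h ▸ hb)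
      have hsum' : ∀ φ : ℝ → ℝ, ∑ b ∈ insert t B₁, Function.update a t (g.1 - S) b * φ b =
          (g.1 - S) * φ t + ∑ b ∈ B₁, a b * φ b := by
        intro φ
        rw [Finset.sum_insert htn, Function.update_self]
        congr 1
        apply Finset.sum_congr rfl
        intro b hb
        rw [Function.update_of_ne (hne b hb)]
      refine ⟨g.2, insert t B₁, Function.update a t (g.1 - S), ?_, ?_, ?_, ?_⟩
      · rw [Finset.card_insert_of_notMem htn, Finset.card_insert_of_notMem hgL]
        have : B₁.card ≤ B.card := Finset.card_filter_le B (fun b => t < b)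
        omega
      · intro b hb
        rcases Finset.mem_insert.1 hb with rfl | hb
        · refine ⟨ht0, ?_⟩
          rw [Function.update_self]
          linarith
        · rw [Function.update_of_ne (hne b hb)]
          exact hB b (Finset.mem_filter.1 hb).1
      · intro s _ h
        have h1 := hsum' (fun _ => 1)
        simp only [mul_one] at h1
        rw [h1]
        have := h g (Finset.mem_insert_self _ _)
        linarith
      · intro x hx y
        rw [hins, ← hG x hx y, hsum' (fun b => min x b)]
        rcases le_total x t with hxt | hxt
        · have e : ∑ b ∈ B₁, a b * min x b = S * x := by
            rw [hSdef, Finset.sum_mul]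
            apply Finset.sum_congr rfl
            intro b hb
            have := (Finset.mem_filter.1 hb).2
            rw [min_eq_left (by linarith)]
          have := hgrow x t hxt
          rw [e, min_eq_left hxt]
          constructor
          · intro h
            constructor <;> linarith
          · rintro ⟨_, h⟩
            linarith
        · have split : ∀ z, t ≤ z → ∑ b ∈ B, a b * min z b =
              ∑ b ∈ B₁, a b * min z b + ∑ b ∈ B.filter (fun b => ¬ t < b), a b * b := by
            intro z hz
            rw [← Finset.sum_filter_add_sum_filter_not B (fun b => t < b)]
            congr 1
            apply Finset.sum_congr rfl
            intro b hb
            have := (Finset.mem_filter.1 hb).2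
            rw [min_eq_right (by linarith)]
          have e : ∑ b ∈ B₁, a b * min t b = S * t := by
            rw [hSdef, Finset.sum_mul]
            apply Finset.sum_congr rfl
            intro b hb
            have := (Finset.mem_filter.1 hb).2
            rw [min_eq_left (by linarith)]
          have h1 := split x hxt
          have h2 := split t le_rfl
          have := hgrow t x hxt
          rw [min_eq_right hxt]
          constructor
          · intro h
            constructor <;> linarith
          · rintro ⟨h, _⟩
            linarith

lemma scb_mono {r : ℕ} {w : ℕ → ℝ} (hw : IsSCB r w) (i j : ℕ) (hij : i ≤ j) :
    j ≤ r → w i ≤ w j := by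
  induction j, hij using Nat.le_induction with
  | base => exact fun _ => le_rfl
  | succ k _ ih => exact fun h => (ih (by omega)).trans (hw.2.1 k (by omega))

/-- **Equivalence of sparse gadget approximation and piecewise linear covering.**
For every `ε ≥ 0`, every `r`-SCB integer function `w`, and every `J : ℕ`, there exists an
`r`-CCB function of order at most `J` with `w ≤ ŵ ≤ (1+ε)·w` on `{0,…,r}` if and only if
there exists a set `L` of at most `J` affine functions with strictly positive slopes and
nonnegative intercepts such that `f(x) = min(w(r), min_{g ∈ L} g(x))` satisfies
`w(i) ≤ f(i) ≤ (1+ε)·w(i)` for all `i ∈ {0,…,r}`. -/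
theorem gadget_approx_iff_linear_cover
    (ε : ℝ) (hε : 0 ≤ ε) (r : ℕ) (hr : 1 ≤ r) (w : ℕ → ℝ) (hw : IsSCB r w) (J : ℕ) :
    (∃ (J' : ℕ) (what : ℕ → ℝ), J' ≤ J ∧ IsCCB r J' what ∧
        ∀ i ≤ r, w i ≤ what i ∧ what i ≤ (1 + ε) * w i)
    ↔
    (∃ L : Finset (ℝ × ℝ), L.card ≤ J ∧ (∀ g ∈ L, 0 < g.1 ∧ 0 ≤ g.2) ∧
        ∀ i ≤ r,
          w i ≤ (insert ((0 : ℝ), w r) L).inf' (Finset.insert_nonempty _ _)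
              (fun g => g.1 * (i : ℝ) + g.2) ∧
          (insert ((0 : ℝ), w r) L).inf' (Finset.insert_nonempty _ _)
              (fun g => g.1 * (i : ℝ) + g.2) ≤ (1 + ε) * w i) := by
  classical
  have hmono := scb_mono hw
  constructor
  · rintro ⟨J', what, hJ, ⟨a, b, ha, hb, hbm, hbr, hrep⟩, happ⟩
    let ℓ : ℝ → ℝ × ℝ := fun t => (∑ j with t ≤ b j, a j, ∑ j with ¬ t ≤ b j, a j * b j)
    have hℓ : ∀ t x, (ℓ t).1 * x + (ℓ t).2 = ∑ j, a j * (if t ≤ b j then x else b j) := by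
      intro t x
      rw [← Finset.sum_filter_add_sum_filter_not Finset.univ (fun j => t ≤ b j)]
      simp only [ℓ]
      rw [Finset.sum_mul]
      congr 1
      · apply Finset.sum_congr rfl
        intro j hj
        rw [if_pos (Finset.mem_filter.1 hj).2]
      · apply Finset.sum_congr rfl
        intro j hj
        rw [if_neg (Finset.mem_filter.1 hj).2]
    refine ⟨Finset.univ.image (fun k => ℓ (b k)), ?_, ?_, ?_⟩
    · refine Finset.card_image_le.trans ?_
      simpa using hJ
    · intro g hg
      obtain ⟨k, -, rfl⟩ := Finset.mem_image.1 hg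
      constructor
      · change 0 < ∑ j with b k ≤ b j, a j
        exact Finset.sum_pos (fun j _ => ha j) ⟨k, by simp⟩
      · change 0 ≤ ∑ j with ¬ b k ≤ b j, a j * b j
        exact Finset.sum_nonneg (fun j _ => mul_nonneg (ha j).le (hb j).le)
    · intro i hi
      obtain ⟨h1, h2⟩ := happ i hi
      constructor
      · rw [Finset.le_inf'_iff]
        intro g hg
        rcases Finset.mem_insert.1 hg with rfl | hg
        · simpa using hmono i r hi le_rfl
        · obtain ⟨k, -, rfl⟩ := Finset.mem_image.1 hg
          rw [hℓ]
          refine h1.trans ?_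
          rw [hrep i hi]
          apply Finset.sum_le_sum
          intro j _
          apply mul_le_mul_of_nonneg_left _ (ha j).le
          split_ifs
          · exact min_le_left _ _
          · exact min_le_right _ _
      · refine le_trans ?_ h2
        by_cases hex : ∃ k, (i : ℝ) ≤ b k
        · obtain ⟨k, hk, hkmin⟩ := Finset.exists_min_image
            (Finset.univ.filter (fun k => (i : ℝ) ≤ b k)) b (by
              obtain ⟨k, hk⟩ := hex
              exact ⟨k, by simpa using hk⟩)
          have hk' := (Finset.mem_filter.1 hk).2
          refine (Finset.inf'_le _ (Finset.mem_insert_of_mem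
            (Finset.mem_image_of_mem _ (Finset.mem_univ k)))).trans ?_
          rw [hℓ, hrep i hi]
          apply le_of_eq
          apply Finset.sum_congr rfl
          intro j _
          congr 1
          split_ifs with h
          · rw [min_eq_left (hk'.trans h)]
          · rw [min_eq_right]
            by_contra hcon
            exact h (hkmin j (by simpa using (not_le.1 hcon).le))
        · push Not at hex
          refine (Finset.inf'_le _ (Finset.mem_insert_self _ _)).trans ?_
          have := (happ r le_rfl).1
          rw [hrep r le_rfl] at this
          rw [hrep i hi]
          simp only [zero_mul, zero_add]
          refine this.trans (le_of_eq ?_)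
          apply Finset.sum_congr rfl
          intro j _
          rw [min_eq_right (hbr j), min_eq_right (hex j).le]
  · rintro ⟨L, hL, hpos, happ⟩
    obtain ⟨c, B, a, hcard, hB, -, hG⟩ := envelope_exists (w r) L (fun g hg => (hpos g hg).1)
    have hF : ∀ i : ℕ, (insert ((0 : ℝ), w r) L).inf' (Finset.insert_nonempty _ _)
              (fun g => g.1 * (i : ℝ) + g.2) = c + ∑ b ∈ B, a b * min (i : ℝ) b := by
      intro i
      apply eq_of_forall_le_iff
      intro y
      rw [hG i (Nat.cast_nonneg i) y, Finset.le_inf'_iff, Finset.forall_mem_insert]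
      simp
    simp only [hF] at happ
    have h0 : ∑ b ∈ B, a b * min 0 b = 0 := by
      apply Finset.sum_eq_zero
      intro b hb
      rw [min_eq_left (hB b hb).1.le, mul_zero]
    have hc : c = 0 := by
      have := happ 0 (Nat.zero_le _)
      rw [hw.1, Nat.cast_zero, h0] at this
      linarith [this.1, this.2]
    subst hc
    simp only [zero_add] at happ hG
    set B' := B.filter (fun b => 0 < a b) with hB'
    have hsum : ∀ x : ℝ, ∑ b ∈ B', a b * min x b = ∑ b ∈ B, a b * min x b := by
      intro x
      apply Finset.sum_subset (Finset.filter_subset _ _)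
      intro b hb hnb
      have : a b = 0 := by
        by_contra hne
        exact hnb (Finset.mem_filter.2 ⟨hb, lt_of_le_of_ne (hB b hb).2 (Ne.symm hne)⟩)
      rw [this, zero_mul]
    have hBr : ∀ b ∈ B', b ≤ (r : ℝ) := by
      intro b hb
      by_contra hcon
      push Not at hcon
      have hbB := (Finset.mem_filter.1 hb).1
      have hab := (Finset.mem_filter.1 hb).2
      have h1 := ((hG b (hB b hbB).1.le _).1 le_rfl).1
      have h2 := (happ r le_rfl).1
      have h3 : ∑ b' ∈ B, a b' * min (r : ℝ) b' < ∑ b' ∈ B, a b' * min b b' := by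
        apply Finset.sum_lt_sum
        · intro b' hb'
          exact mul_le_mul_of_nonneg_left (min_le_min_right _ hcon.le) (hB b' hb').2
        · refine ⟨b, hbB, mul_lt_mul_of_pos_left ?_ hab⟩
          rw [min_self, min_eq_left hcon.le]
          exact hcon
      linarith
    let e := B'.orderEmbOfFin rfl
    refine ⟨B'.card, fun i => ∑ b ∈ B, a b * min (i : ℝ) b,
      (Finset.card_filter_le _ _).trans (hcard.trans hL), ⟨fun j => a (e j), fun j => e j,
        ?_, ?_, ?_, ?_, ?_⟩, happ⟩
    · intro j
      exact (Finset.mem_filter.1 (B'.orderEmbOfFin_mem rfl j)).2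
    · intro j
      exact (hB _ (Finset.mem_filter.1 (B'.orderEmbOfFin_mem rfl j)).1).1
    · exact e.strictMono
    · intro j
      exact hBr _ (B'.orderEmbOfFin_mem rfl j)
    · intro i _
      simp only
      rw [← hsum]
      have himg : Finset.univ.map e.toEmbedding = B' := by
        simp [e]
      conv_lhs => rw [← himg]
      rw [Finset.sum_map]
      rfl
end
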